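/- The node F₃₄ is the orthocenter of the triangle A₄ F A₃: the vector F₃₄ − A₃ is orthogonal to F − A₄ and the vector F₃₄ − A₄ is orthogonal to F − A₃. Likewise the node F₁₂ is the orthocenter of the triangle A₁' F A₂': the vector F₁₂ − A₁' is orthogonal to F − A₂' and the vector F₁₂ − A₂' is orthogonal to F − A₁'. -/

import Mathlib

open Real EuclideanGeometry

noncomputable def pt (x y : ℝ) : EuclideanSpace ℝ (Fin 2) :=
  (WithLp.equiv 2 (Fin 2 → ℝ)).symm ![x, y]

theorem stmt_6 (a12 a34 d θ : ℝ) (ha12 : 0 < a12) (ha34 : 0 < a34)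
    (hd : max a12 a34 < d)
    (hθ : θ = 2 * Real.arctan ((a12 + a34) / (2 * d)))
    (A₁' A₂' A₃ A₄ F F₁₂ F₃₄ : EuclideanSpace ℝ (Fin 2))
    (hA₁ : A₁' = pt (-(a12 / 2)) d) (hA₂ : A₂' = pt (a12 / 2) d)
    (hA₃ : A₃ = pt (a34 / 2) 0) (hA₄ : A₄ = pt (-(a34 / 2)) 0)
    (hF : F = pt 0 (d * a34 / (a12 + a34)))
    (hF₁₂ : F₁₂ = pt 0 (d - a12 / 2 * Real.tan (θ / 2)))
    (hF₃₄ : F₃₄ = pt 0 (a34 / 2 * Real.tan (θ / 2))) :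
    inner ℝ (F₃₄ - A₃) (F - A₄) = (0 : ℝ) ∧
    inner ℝ (F₃₄ - A₄) (F - A₃) = (0 : ℝ) ∧
    inner ℝ (F₁₂ - A₁') (F - A₂') = (0 : ℝ) ∧
    inner ℝ (F₁₂ - A₂') (F - A₁') = (0 : ℝ) := by
  have hd0 : 0 < d := lt_trans (lt_of_lt_of_le ha12 (le_max_left _ _)) hd
  have hs : a12 + a34 ≠ 0 := by positivity
  have ht : Real.tan (θ / 2) = (a12 + a34) / (2 * d) := by
    rw [hθ, mul_div_cancel_left₀ _ (two_ne_zero), Real.tan_arctan]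
  have key : ∀ x y z w x' y' z' w' : ℝ,
      inner ℝ (pt x y - pt z w) (pt x' y' - pt z' w')
        = (x - z) * (x' - z') + (y - w) * (y' - w') := by
    intro x y z w x' y' z' w'
    simp [pt, PiLp.inner_apply, Fin.sum_univ_two]
    ring
  subst hA₁ hA₂ hA₃ hA₄ hF hF₁₂ hF₃₄
  rw [ht]
  simp only [key]
  refine ⟨?_, ?_, ?_, ?_⟩ <;> field_simp <;> ring
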